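/- arXiv:1603.05384 — 2 statements merged into one kernel-verified Lean document; each statement's English description precedes it below -/
import Mathlib

section
/- Let F be a field with char F ∉ {2, 3} and let V be an F-vector space of finite dimension d ≥ 2. Let L³V denote the subspace of T³V = V ⊗ V ⊗ V spanned by the elements [[u, v], w] for u, v, w ∈ V, where [x, y] = x ⊗ y − y ⊗ x. Then L³V is an irreducible GL(V)-module: the only subspaces of L³V that are invariant under g ⊗ g ⊗ g for every g ∈ GL(V) are {0} and L³V itself. -/
/-!
STATEMENT 11: Let `F` be a field with `char F ∉ {2, 3}` and let `V` be an
`F`-vector space of finite dimension `d ≥ 2`.  Let `L³V ⊆ T³V = V ⊗ V ⊗ V` be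
the span of the left-normed brackets `[[u, v], w]`.  Then `L³V` is an
irreducible `GL(V)`-module: the only subspaces of `L³V` invariant under
`g ⊗ g ⊗ g` for every `g ∈ GL(V)` are `{0}` and `L³V` itself.
-/

open TensorProduct

section Defs

variable (F : Type*) {V : Type*} [Field F] [AddCommGroup V] [Module F V]

/-- `[u, w] = u ⊗ w − w ⊗ u ∈ T²V`. -/
noncomputable def br11 (u w : V) : V ⊗[F] V :=
  u ⊗ₜ[F] w - w ⊗ₜ[F] u

/-- `[x, y] = x ⊗ y − y ⊗ x ∈ T³V` for `x ∈ T²V`, `y ∈ V`. -/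
noncomputable def br21 (x : V ⊗[F] V) (y : V) : (V ⊗[F] V) ⊗[F] V :=
  x ⊗ₜ[F] y - (TensorProduct.assoc F V V V).symm (y ⊗ₜ[F] x)

/-- The Lie power `L³V`: the subspace of `T³V` spanned by all `[[u,v],w]`. -/
noncomputable def L3 : Submodule F ((V ⊗[F] V) ⊗[F] V) :=
  Submodule.span F {x | ∃ u v w : V, x = br21 F (br11 F u v) w}

/-- The diagonal action `g ⊗ g ⊗ g` of `GL(V)` on `T³V`. -/
noncomputable def map3 (g : V →ₗ[F] V) :
    ((V ⊗[F] V) ⊗[F] V) →ₗ[F] ((V ⊗[F] V) ⊗[F] V) :=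
  TensorProduct.map (TensorProduct.map g g) g

end Defs

/-!
Let `N = u ⊗ f` be an operator of rank at most one and let `D_N` be the derivation of `T³V` it
induces. On `L³V` the operator `N ⊗ N ⊗ N` vanishes, because brackets of multiples of `u` do, so
`(1 + N)^{⊗3} - (1 - N)^{⊗3}` restricts to `2 D_N`. After rescaling `f` so that `f u` is `0` or `2`,
both `1 + N` and `1 - N` are invertible, hence an invariant subspace `W` of `L³V` is stable under
all `D_N`. It is then stable under the polarization `∑_σ A_{σ1} ⊗ A_{σ2} ⊗ A_{σ3}` for all
`A_1`, `A_2`, `A_3` of rank at most one, since this is a noncommutative polynomial in such `D_N`.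
If `A_1 = u ⊗ f`, `A_2 = v ⊗ g` and `A_3 = u ⊗ h`, it maps `x ∈ L³V` to
`(f ⊗ g ⊗ h)(x) [[u, v], u]`, so a nonzero `x ∈ W` puts every `[[u, v], u]` into `W`; by the Jacobi
identity the span of these elements contains `3 L³V = L³V`.
-/

/-- The third tensor power `T³M`, with the bracketing used by `L3` and `map3`. -/
abbrev TensorCube (R M : Type*) [CommSemiring R] [AddCommMonoid M] [Module R M] : Type _ :=
  (M ⊗[R] M) ⊗[R] M

namespace TensorCube

section CommSemiring

variable {R M : Type*} [CommSemiring R] [AddCommMonoid M] [Module R M]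

/-- The derivation `A ⊗ 1 ⊗ 1 + 1 ⊗ A ⊗ 1 + 1 ⊗ 1 ⊗ A` of `T³M` induced by an endomorphism `A`
of `M`, as a linear function of `A`. -/
noncomputable def derivation : Module.End R M →ₗ[R] Module.End R (TensorCube R M) :=
  LinearMap.rTensorHom M ∘ₗ (LinearMap.rTensorHom M + LinearMap.lTensorHom M) +
    LinearMap.lTensorHom (M ⊗[R] M)

theorem derivation_tmul (A : Module.End R M) (a b c : M) :
    derivation A (a ⊗ₜ[R] b ⊗ₜ[R] c) =
      A a ⊗ₜ[R] b ⊗ₜ[R] c + a ⊗ₜ[R] A b ⊗ₜ[R] c + a ⊗ₜ[R] b ⊗ₜ[R] A c := by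
  simp [derivation]

/-- The full polarization of the cubic map `A ↦ A ⊗ A ⊗ A`: the sum over all orderings of the
three endomorphisms. -/
noncomputable def polarization (A B C : Module.End R M) : Module.End R (TensorCube R M) :=
  map (map A B) C + map (map A C) B + map (map B A) C +
    map (map B C) A + map (map C A) B + map (map C B) A

theorem polarization_tmul (A B C : Module.End R M) (a b c : M) :
    polarization A B C (a ⊗ₜ[R] b ⊗ₜ[R] c) =
      A a ⊗ₜ[R] B b ⊗ₜ[R] C c + A a ⊗ₜ[R] C b ⊗ₜ[R] B c + B a ⊗ₜ[R] A b ⊗ₜ[R] C c +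
        B a ⊗ₜ[R] C b ⊗ₜ[R] A c + C a ⊗ₜ[R] A b ⊗ₜ[R] B c + C a ⊗ₜ[R] B b ⊗ₜ[R] A c := by
  simp [polarization]

/-- The linear form `f ⊗ g ⊗ h` on `T³M`. -/
noncomputable def dualTmul (f g h : Module.Dual R M) : Module.Dual R (TensorCube R M) :=
  dualDistrib R (M ⊗[R] M) M (dualDistrib R M M (f ⊗ₜ[R] g) ⊗ₜ[R] h)

theorem dualTmul_tmul (f g h : Module.Dual R M) (a b c : M) :
    dualTmul f g h (a ⊗ₜ[R] b ⊗ₜ[R] c) = f a * g b * h c := by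
  simp [dualTmul]

theorem exists_dualTmul_ne_zero [Module.Free R M] {x : TensorCube R M} (hx : x ≠ 0) :
    ∃ f g h : Module.Dual R M, dualTmul f g h x ≠ 0 := by
  by_contra! hzero
  let b := Module.Free.chooseBasis R M
  let b₃ := (b.tensorProduct b).tensorProduct b
  have hcoord (i j k) : b₃.coord ((i, j), k) = dualTmul (b.coord i) (b.coord j) (b.coord k) := by
    refine TensorProduct.ext_threefold fun a b c ↦ ?_
    simp [b₃, dualTmul_tmul, mul_comm, mul_left_comm]
  refine hx (b₃.forall_coord_eq_zero_iff.mp fun ⟨⟨i, j⟩, k⟩ ↦ ?_)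
  rw [hcoord, hzero]

/-- The endomorphisms `x ↦ f x • u`, which over a field are those of rank at most one, as a
multiplicative semigroup. -/
def rankLEOne (R M : Type*) [CommSemiring R] [AddCommMonoid M] [Module R M] :
    Subsemigroup (Module.End R M) where
  carrier := {A | ∃ (f : Module.Dual R M) (u : M), f.smulRight u = A}
  mul_mem' := by
    rintro _ _ ⟨f, u, rfl⟩ ⟨g, v, rfl⟩
    exact ⟨f v • g, u, by ext x; simp [smul_smul, mul_comm]⟩

theorem smulRight_mem_rankLEOne (f : Module.Dual R M) (u : M) :
    f.smulRight u ∈ rankLEOne R M :=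
  ⟨f, u, rfl⟩

end CommSemiring

section CommRing

variable {R M : Type*} [CommRing R] [AddCommGroup M] [Module R M]

theorem polarization_eq (A B C : Module.End R M) :
    polarization A B C =
      derivation A * derivation B * derivation C - derivation (A * B) * derivation C -
        derivation (A * C) * derivation B - derivation A * derivation (B * C) +
        derivation (A * C * B) + derivation (A * B * C) := by
  refine TensorProduct.ext_threefold fun a b c ↦ ?_
  simp only [polarization_tmul, LinearMap.add_apply, LinearMap.sub_apply, Module.End.mul_apply,
    derivation_tmul, map_add]
  abel

theorem polarization_mem {S : Subsemigroup (Module.End R M)} {W : Submodule R (TensorCube R M)}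
    (hW : ∀ A ∈ S, ∀ x ∈ W, derivation A x ∈ W) {A B C : Module.End R M} (hA : A ∈ S) (hB : B ∈ S)
    (hC : C ∈ S) {x : TensorCube R M} (hx : x ∈ W) : polarization A B C x ∈ W := by
  have hA_B_C := hW A hA _ (hW B hB _ (hW C hC x hx))
  have hAB_C := hW _ (S.mul_mem hA hB) _ (hW C hC x hx)
  have hAC_B := hW _ (S.mul_mem hA hC) _ (hW B hB x hx)
  have hA_BC := hW A hA _ (hW _ (S.mul_mem hB hC) x hx)
  have hACB := hW _ (S.mul_mem (S.mul_mem hA hC) hB) x hx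
  have hABC := hW _ (S.mul_mem (S.mul_mem hA hB) hC) x hx
  rw [polarization_eq]
  exact W.add_mem
    (W.add_mem (W.sub_mem (W.sub_mem (W.sub_mem hA_B_C hAB_C) hAC_B) hA_BC) hACB) hABC

end CommRing

end TensorCube

section LieCube

open TensorCube

variable {F V : Type*} [Field F] [AddCommGroup V] [Module F V]

theorem br21_br11 (u v w : V) :
    br21 F (br11 F u v) w =
      u ⊗ₜ[F] v ⊗ₜ[F] w - v ⊗ₜ[F] u ⊗ₜ[F] w - w ⊗ₜ[F] u ⊗ₜ[F] v + w ⊗ₜ[F] v ⊗ₜ[F] u := by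
  simp only [br21, br11, sub_tmul, tmul_sub, map_sub, assoc_symm_tmul]
  abel

theorem br11_self (u : V) : br11 F u u = 0 :=
  sub_self _

theorem br21_zero_left (w : V) : br21 F 0 w = 0 := by
  simp [br21]

-- Polarizing `[[u, v], u]` in `u` gives `[[u, v], w] + [[w, v], u]`; subtracting the same
-- expression with `u` and `v` swapped leaves `3 [[u, v], w]` by the Jacobi identity.
theorem three_smul_br21_br11 (u v w : V) :
    (3 : F) • br21 F (br11 F u v) w =
      (br21 F (br11 F (u + w) v) (u + w) - br21 F (br11 F u v) u - br21 F (br11 F w v) w) -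
        (br21 F (br11 F (v + w) u) (v + w) - br21 F (br11 F v u) v - br21 F (br11 F w u) w) := by
  simp only [br21_br11, add_tmul, tmul_add]
  module

theorem L3_le_of_br21_br11_mem (h3 : (3 : F) ≠ 0) {W : Submodule F (TensorCube F V)}
    (hW : ∀ u v : V, br21 F (br11 F u v) u ∈ W) : L3 F (V := V) ≤ W := by
  refine Submodule.span_le.mpr ?_
  rintro _ ⟨u, v, w, rfl⟩
  rw [SetLike.mem_coe, ← W.smul_mem_iff h3, three_smul_br21_br11]
  exact W.sub_mem (W.sub_mem (W.sub_mem (hW _ _) (hW _ _)) (hW _ _))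
    (W.sub_mem (W.sub_mem (hW _ _) (hW _ _)) (hW _ _))

theorem map3_smulRight_of_mem_L3 (f : Module.Dual F V) (u : V) {x : TensorCube F V}
    (hx : x ∈ L3 F (V := V)) : map3 F (f.smulRight u) x = 0 := by
  suffices L3 F (V := V) ≤ LinearMap.ker (map3 F (f.smulRight u)) from this hx
  refine Submodule.span_le.mpr ?_
  rintro _ ⟨a, b, c, rfl⟩
  simp only [SetLike.mem_coe, LinearMap.mem_ker, br21_br11, map3, map_add, map_sub, map_tmul,
    LinearMap.smulRight_apply, ← smul_tmul', tmul_smul]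
  module

theorem polarization_smulRight_of_mem_L3 (f g h : Module.Dual F V) (u v w : V)
    {x : TensorCube F V} (hx : x ∈ L3 F (V := V)) :
    polarization (f.smulRight u) (g.smulRight v) (h.smulRight w) x =
      dualTmul f g h x • br21 F (br11 F u v) w + dualTmul f h g x • br21 F (br11 F u w) v := by
  suffices L3 F (V := V) ≤ LinearMap.eqLocus
      (polarization (f.smulRight u) (g.smulRight v) (h.smulRight w))
      ((dualTmul f g h).smulRight (br21 F (br11 F u v) w) +
        (dualTmul f h g).smulRight (br21 F (br11 F u w) v)) from this hx
  refine Submodule.span_le.mpr ?_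
  rintro _ ⟨a, b, c, rfl⟩
  simp only [SetLike.mem_coe, LinearMap.mem_eqLocus, LinearMap.add_apply,
    LinearMap.smulRight_apply, br21_br11, map_add, map_sub, polarization_tmul, dualTmul_tmul,
    ← smul_tmul', tmul_smul]
  module

theorem map3_one_add_sub_map3_one_sub (A : Module.End F V) :
    map3 F (1 + A) - map3 F (1 - A) = (2 : F) • (derivation A + map3 F A) := by
  refine TensorProduct.ext_threefold fun a b c ↦ ?_
  simp only [map3, LinearMap.sub_apply, LinearMap.add_apply, LinearMap.smul_apply, map_tmul,
    Module.End.one_apply, derivation_tmul, add_tmul, tmul_add, sub_tmul, tmul_sub]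
  module

section Invariant

variable {W : Submodule F (TensorCube F V)}

theorem map3_one_add_smulRight_mem (hWinv : ∀ (g : V ≃ₗ[F] V), ∀ x ∈ W, map3 F g.toLinearMap x ∈ W)
    {f : Module.Dual F V} {u : V} (hfu : 1 + f u ≠ 0) {x : TensorCube F V} (hx : x ∈ W) :
    map3 F (1 + f.smulRight u) x ∈ W :=
  hWinv (LinearEquiv.dilatransvection hfu.isUnit) x hx

theorem derivation_smulRight_mem_of_ne (h2 : (2 : F) ≠ 0) (hWL : W ≤ L3 F (V := V))
    (hWinv : ∀ (g : V ≃ₗ[F] V), ∀ x ∈ W, map3 F g.toLinearMap x ∈ W)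
    {f : Module.Dual F V} {u : V} (hadd : 1 + f u ≠ 0) (hsub : 1 - f u ≠ 0)
    {x : TensorCube F V} (hx : x ∈ W) : derivation (f.smulRight u) x ∈ W := by
  have hplus : map3 F (1 + f.smulRight u) x ∈ W := map3_one_add_smulRight_mem hWinv hadd hx
  have hminus : map3 F (1 - f.smulRight u) x ∈ W := by
    have hneg : 1 - f.smulRight u = 1 + (-f).smulRight u := by
      ext y; simp [sub_eq_add_neg]
    rw [hneg]
    exact map3_one_add_smulRight_mem hWinv (by simpa [← sub_eq_add_neg] using hsub) hx
  have hdiff := LinearMap.congr_fun (map3_one_add_sub_map3_one_sub (f.smulRight u)) x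
  simp only [LinearMap.sub_apply, LinearMap.smul_apply, LinearMap.add_apply,
    map3_smulRight_of_mem_L3 f u (hWL hx), add_zero] at hdiff
  exact (W.smul_mem_iff h2).mp (hdiff ▸ W.sub_mem hplus hminus)

theorem derivation_mem_of_mem_rankLEOne (h2 : (2 : F) ≠ 0) (h3 : (3 : F) ≠ 0)
    (hWL : W ≤ L3 F (V := V)) (hWinv : ∀ (g : V ≃ₗ[F] V), ∀ x ∈ W, map3 F g.toLinearMap x ∈ W) :
    ∀ A ∈ rankLEOne F V, ∀ x ∈ W, derivation A x ∈ W := by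
  rintro _ ⟨f, u, rfl⟩ x hx
  by_cases hfu : f u = 0
  · exact derivation_smulRight_mem_of_ne h2 hWL hWinv (by simp [hfu]) (by simp [hfu]) hx
  let c : F := 2 / f u
  have hc : c ≠ 0 := div_ne_zero h2 hfu
  have hcfu : (c • f) u = 2 := div_mul_cancel₀ 2 hfu
  have one_add_two : (1 : F) + 2 = 3 := by norm_num
  have hmem : derivation ((c • f).smulRight u) x ∈ W :=
    derivation_smulRight_mem_of_ne h2 hWL hWinv (by rwa [hcfu, one_add_two])
      (by rw [hcfu]; norm_num) hx
  have hsmul : (c • f).smulRight u = c • f.smulRight u := by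
    ext y; simp [smul_smul]
  rwa [hsmul, map_smul, LinearMap.smul_apply, W.smul_mem_iff hc] at hmem

end Invariant

end LieCube

theorem lie_power_three_irreducible_general
    (F V : Type*) [Field F] [AddCommGroup V] [Module F V]
    (h2 : ringChar F ≠ 2) (h3 : ringChar F ≠ 3)
    (W : Submodule F ((V ⊗[F] V) ⊗[F] V))
    (hWL : W ≤ L3 F (V := V))
    (hWinv : ∀ (g : V ≃ₗ[F] V), ∀ x ∈ W, map3 F g.toLinearMap x ∈ W) :
    W = ⊥ ∨ W = L3 F (V := V) := by
  have two_ne : (2 : F) ≠ 0 := Ring.two_ne_zero h2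
  have three_ne : (3 : F) ≠ 0 := CharP.cast_ne_zero_of_ne_of_prime F Nat.prime_three h3
  refine or_iff_not_imp_left.mpr fun hW ↦ ?_
  obtain ⟨x, hxW, hx0⟩ := W.exists_mem_ne_zero_of_ne_bot hW
  obtain ⟨f, g, h, hfgh⟩ := TensorCube.exists_dualTmul_ne_zero hx0
  refine le_antisymm hWL (L3_le_of_br21_br11_mem three_ne fun u v ↦ ?_)
  have hmem : TensorCube.polarization (f.smulRight u) (g.smulRight v) (h.smulRight u) x ∈ W :=
    TensorCube.polarization_mem (derivation_mem_of_mem_rankLEOne two_ne three_ne hWL hWinv)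
      (TensorCube.smulRight_mem_rankLEOne f u) (TensorCube.smulRight_mem_rankLEOne g v)
      (TensorCube.smulRight_mem_rankLEOne h u) hxW
  rwa [polarization_smulRight_of_mem_L3 f g h u v u (hWL hxW), br11_self, br21_zero_left,
    smul_zero, add_zero, W.smul_mem_iff hfgh] at hmem

theorem lie_power_three_irreducible
    (F V : Type*) [Field F] [AddCommGroup V] [Module F V] [FiniteDimensional F V]
    (h2 : ringChar F ≠ 2) (h3 : ringChar F ≠ 3)
    (hd : 2 ≤ Module.finrank F V)
    (W : Submodule F ((V ⊗[F] V) ⊗[F] V))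
    (hWL : W ≤ L3 F (V := V))
    (hWinv : ∀ (g : V ≃ₗ[F] V), ∀ x ∈ W, map3 F g.toLinearMap x ∈ W) :
    W = ⊥ ∨ W = L3 F (V := V) :=
  lie_power_three_irreducible_general F V h2 h3 W hWL hWinv
end

section
/- Let F be a field with char F ∉ {2, 3} and let V be an F-vector space of dimension 2. Let L⁴V denote the subspace of T⁴V = V ⊗ V ⊗ V ⊗ V spanned by the left-normed brackets [[[u, v], w], x] for u, v, w, x ∈ V, where [x, y] = x ⊗ y − y ⊗ x, and let S²V denote the subspace of V ⊗ V spanned by the elements v ⊗ w + w ⊗ v. Then there exists a GL(V)-equivariant linear isomorphism Λ²V ⊗ S²V → L⁴V (where g ∈ GL(V) acts on Λ²V ⊗ S²V by (Λ²g) ⊗ (g ⊗ g) and on L⁴V by g ⊗ g ⊗ g ⊗ g); in particular dim L⁴V = 3, and L⁴V is an irreducible GL(V)-module: its only GL(V)-invariant subspaces are {0} and L⁴V. -/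
/-!
STATEMENT 13: Let `char F ∉ {2, 3}` and `dim V = 2`.  Let `L⁴V ⊆ T⁴V` be the
span of the left-normed brackets `[[[u,v],w],x]` (computed in the tensor
algebra, with `T⁴V` realised as `(V ⊗ V) ⊗ (V ⊗ V)`) and `S²V ⊆ V ⊗ V` the span
of the elements `v ⊗ w + w ⊗ v`.  Then there exists a `GL(V)`-equivariant
linear isomorphism `Λ²V ⊗ S²V ≅ L⁴V` (where `g` acts by `Λ²g ⊗ (g ⊗ g)` on the
source and by `g ⊗ g ⊗ g ⊗ g` on `T⁴V`); in particular `dim L⁴V = 3`, and `L⁴V`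
is an irreducible `GL(V)`-module.
-/

open TensorProduct ExteriorAlgebra

open TensorProduct ExteriorAlgebra

section Ext

variable (F : Type*) {V W : Type*} [Field F] [AddCommGroup V] [Module F V]
  [AddCommGroup W] [Module F W]

/-- The morphism of exterior algebras induced by a linear map sends the `n`-th
exterior power into the `n`-th exterior power. -/
lemma exteriorPower_map_mem (n : ℕ) (f : V →ₗ[F] W) {x : ExteriorAlgebra F V}
    (hx : x ∈ ⋀[F]^n V) : ExteriorAlgebra.map f x ∈ ⋀[F]^n W := by
  rw [← ExteriorAlgebra.ιMulti_span_fixedDegree] at hx ⊢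
  induction hx using Submodule.span_induction with
  | mem y hy =>
      obtain ⟨m, rfl⟩ := hy
      rw [ExteriorAlgebra.map_apply_ιMulti]
      exact Submodule.subset_span ⟨_, rfl⟩
  | zero => simp
  | add a b _ _ h1 h2 => simpa using add_mem h1 h2
  | smul c a _ h => simpa using Submodule.smul_mem _ c h

/-- The linear map `⋀ⁿ f : ⋀ⁿ V → ⋀ⁿ W` induced by a linear map `f : V → W`. -/
noncomputable def extPowMap (n : ℕ) (f : V →ₗ[F] W) : ⋀[F]^n V →ₗ[F] ⋀[F]^n W :=
  (ExteriorAlgebra.map f).toLinearMap.restrict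
    (fun _ hx => exteriorPower_map_mem F n f hx)

/-- The wedge `u ∧ v` as an element of the second exterior power `⋀²V`. -/
noncomputable def wedge2 (u v : V) : ⋀[F]^2 V :=
  ⟨ExteriorAlgebra.ιMulti F 2 ![u, v],
    ExteriorAlgebra.ιMulti_range F 2 (Set.mem_range_self _)⟩

/-- The wedge `u ∧ v ∧ w` as an element of the third exterior power `⋀³V`. -/
noncomputable def wedge3 (u v w : V) : ⋀[F]^3 V :=
  ⟨ExteriorAlgebra.ιMulti F 3 ![u, v, w],
    ExteriorAlgebra.ιMulti_range F 3 (Set.mem_range_self _)⟩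

end Ext

section Defs

variable (F : Type*) {V : Type*} [Field F] [AddCommGroup V] [Module F V]

/-- The canonical isomorphism `T³V ⊗ V ≃ T⁴V` (with `T⁴V = (V⊗V) ⊗ (V⊗V)`). -/
noncomputable def e31 : (((V ⊗[F] V) ⊗[F] V) ⊗[F] V) ≃ₗ[F] (V ⊗[F] V) ⊗[F] (V ⊗[F] V) :=
  TensorProduct.assoc F (V ⊗[F] V) V V

/-- The canonical isomorphism `V ⊗ T³V ≃ T⁴V` built from associators. -/
noncomputable def e13 : (V ⊗[F] ((V ⊗[F] V) ⊗[F] V)) ≃ₗ[F] (V ⊗[F] V) ⊗[F] (V ⊗[F] V) :=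
  (TensorProduct.assoc F V (V ⊗[F] V) V).symm ≪≫ₗ
    TensorProduct.congr (TensorProduct.assoc F V V V).symm (LinearEquiv.refl F V) ≪≫ₗ
    TensorProduct.assoc F (V ⊗[F] V) V V

/-- `[z, y] = z ⊗ y − y ⊗ z ∈ T⁴V` for `z ∈ T³V`, `y ∈ V`. -/
noncomputable def br31 (z : (V ⊗[F] V) ⊗[F] V) (y : V) :
    (V ⊗[F] V) ⊗[F] (V ⊗[F] V) :=
  e31 F (z ⊗ₜ[F] y) - e13 F (y ⊗ₜ[F] z)

/-- The Lie power `L⁴V`: the span in `T⁴V` of all `[[[u,v],w],x]`. -/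
noncomputable def L4 : Submodule F ((V ⊗[F] V) ⊗[F] (V ⊗[F] V)) :=
  Submodule.span F {t | ∃ u v w x : V, t = br31 F (br21 F (br11 F u v) w) x}

/-- The symmetric square `S²V`: the span in `V ⊗ V` of all `v ⊗ w + w ⊗ v`. -/
noncomputable def S2 : Submodule F (V ⊗[F] V) :=
  Submodule.span F {x | ∃ v w : V, x = v ⊗ₜ[F] w + w ⊗ₜ[F] v}

/-- The diagonal action `g ⊗ g ⊗ g ⊗ g` on `T⁴V = (V⊗V) ⊗ (V⊗V)`. -/
noncomputable def map4 (g : V →ₗ[F] V) :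
    ((V ⊗[F] V) ⊗[F] (V ⊗[F] V)) →ₗ[F] ((V ⊗[F] V) ⊗[F] (V ⊗[F] V)) :=
  TensorProduct.map (TensorProduct.map g g) (TensorProduct.map g g)

/-- `g ⊗ g` preserves the symmetric square. -/
lemma S2_map_mem (g : V →ₗ[F] V) {x : V ⊗[F] V} (hx : x ∈ S2 F) :
    TensorProduct.map g g x ∈ S2 F (V := V) := by
  induction hx using Submodule.span_induction with
  | mem y hy =>
      obtain ⟨v, w, rfl⟩ := hy
      exact Submodule.subset_span ⟨g v, g w, by simp⟩
  | zero => simp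
  | add a b _ _ h1 h2 => simpa using add_mem h1 h2
  | smul c a _ h => simpa using Submodule.smul_mem _ c h

/-- The restriction of `g ⊗ g` to the symmetric square `S²V`. -/
noncomputable def S2map (g : V →ₗ[F] V) : S2 F (V := V) →ₗ[F] S2 F (V := V) :=
  (TensorProduct.map g g).restrict (fun _ hx => S2_map_mem F g hx)

end Defs

/-!
The Jacobi identity gives `[[[u, v], w], x] - [[[u, v], x], w] = [[u, v], [w, x]]`, and in dimension
two this vanishes because `⋀²V` is a line. So `[[[u, v], w], x]` factors through `⋀²V ⊗ S²V`, and
`L⁴V` is spanned by three brackets `[[[p, q], w], x]`, whose independence is read off coordinates.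
Up to the twist by `det g` the group acts on `L⁴V` as on `S²V`, which has no proper nonzero
invariant subspace: a transvection forces a square into it, the squares form a single orbit, and
they span by polarization.
-/

section AlternatingMap

variable {R M N ι : Type*} [CommRing R] [AddCommGroup M] [Module R M] [AddCommGroup N] [Module R N]

lemma alternatingMap_apply_eq_det_smul [Fintype ι] [DecidableEq ι] (e : Module.Basis ι R M)
    (f : M [⋀^ι]→ₗ[R] N) (v : ι → M) : f v = e.det v • f e := by
  suffices f = (LinearMap.toSpanSingleton R N (f e)).compAlternatingMap e.det from
    DFunLike.congr_fun this v
  refine e.ext_alternating fun i hi => ?_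
  let σ : Equiv.Perm ι := Equiv.ofBijective i (Finite.injective_iff_bijective.1 hi)
  change f (e ∘ σ) = e.det (e ∘ σ) • f e
  simp [AlternatingMap.map_perm, e.det_self]

lemma alternatingMap_apply_comp [Finite ι] (e : Module.Basis ι R M) (f : M [⋀^ι]→ₗ[R] N)
    (g : M →ₗ[R] M) (v : ι → M) : f (g ∘ v) = LinearMap.det g • f v := by
  classical
  have := Fintype.ofFinite ι
  rw [alternatingMap_apply_eq_det_smul e f (g ∘ v), alternatingMap_apply_eq_det_smul e f v,
    e.det_comp, mul_smul]

end AlternatingMap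

section LinearMap

variable {F M N : Type*} [DivisionRing F] [AddCommGroup M] [Module F M] [AddCommGroup N]
  [Module F N]

lemma injective_of_finrank_le_finrank_range [Module.Finite F M] {f : M →ₗ[F] N}
    (hf : Module.finrank F M ≤ Module.finrank F (LinearMap.range f)) : Function.Injective f := by
  have rank_nullity := f.finrank_range_add_finrank_ker
  exact LinearMap.ker_eq_bot.1 (Submodule.finrank_eq_zero.1 (by omega))

end LinearMap

section GeneralLinearGroup

variable {F V : Type*} [DivisionRing F] [AddCommGroup V] [Module F V]

lemma exists_linearEquiv_apply_eq {v w : V} (hv : v ≠ 0) (hw : w ≠ 0) :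
    ∃ g : V ≃ₗ[F] V, g v = w := by
  let spanEquiv := (LinearEquiv.toSpanNonzeroSingleton F V v hv).symm ≪≫ₗ
    LinearEquiv.toSpanNonzeroSingleton F V w hw
  obtain ⟨g, hg⟩ := Submodule.exists_linearEquiv_restrict_eq spanEquiv
  refine ⟨g, ?_⟩
  rw [← hg ⟨v, Submodule.mem_span_singleton_self v⟩]
  have coord_v : (LinearEquiv.toSpanNonzeroSingleton F V v hv).symm
      ⟨v, Submodule.mem_span_singleton_self v⟩ = 1 := LinearEquiv.coord_self F V v hv
  simp [spanEquiv, coord_v]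

end GeneralLinearGroup

section SymmetricBilinear

variable {R M N : Type*} [CommSemiring R] [AddCommMonoid M] [Module R M] [AddCommMonoid N]
  [Module R N]

/-- The values `B p p`, `B p q`, `B q q` of a bilinear map at a basis `(p, q)`. When `B` is
symmetric they play the role of the monomials `p²`, `pq`, `q²` of the symmetric square. -/
noncomputable def quadraticMonomials (B : M →ₗ[R] M →ₗ[R] N) (b : Module.Basis (Fin 2) R M) :
    Fin 3 → N :=
  ![B (b 0) (b 0), B (b 0) (b 1), B (b 1) (b 1)]

variable {B : M →ₗ[R] M →ₗ[R] N}

lemma map₂_top_eq_span_quadraticMonomials (hB : ∀ v w, B v w = B w v)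
    (b : Module.Basis (Fin 2) R M) :
    Submodule.map₂ B ⊤ ⊤ = Submodule.span R (Set.range (quadraticMonomials B b)) := by
  have range_basis : Set.range b = {b 0, b 1} := by
    ext
    simp [eq_comm]
  have range_monomials : Set.range (quadraticMonomials B b) =
      {B (b 0) (b 0), B (b 0) (b 1), B (b 1) (b 1)} := by
    simp only [quadraticMonomials, Matrix.range_cons, Matrix.range_empty, Set.union_empty,
      Set.singleton_union]
  rw [← b.span_eq, Submodule.map₂_span_span, range_basis, range_monomials]
  simp only [Set.image2_insert_left, Set.image2_singleton_left, Set.image_pair, hB (b 1) (b 0)]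
  congr 1
  ext
  simp only [Set.mem_union, Set.mem_insert_iff, Set.mem_singleton_iff]
  tauto

end SymmetricBilinear

section SymmetricSquare

variable {F V N : Type*} [Field F] [AddCommGroup V] [Module F V] [AddCommGroup N] [Module F N]

lemma apply_zero_mem_of_unipotent (h2 : (2 : F) ≠ 0) {T : N →ₗ[F] N} {x : Fin 3 → N}
    (h_zero : T (x 0) = x 0) (h_one : T (x 1) = x 0 + x 1)
    (h_two : T (x 2) = x 0 + (2 : F) • x 1 + x 2) {W : Submodule F N} (hW : ∀ y ∈ W, T y ∈ W)
    (hWx : W ≤ Submodule.span F (Set.range x)) (hW_ne : W ≠ ⊥) : x 0 ∈ W := by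
  obtain ⟨y, hy, hy_ne⟩ := W.ne_bot_iff.1 hW_ne
  obtain ⟨c, hc⟩ := (Submodule.mem_span_range_iff_exists_fun F).1 (hWx hy)
  rw [Fin.sum_univ_three] at hc
  have sub_mem_W : ∀ z ∈ W, T z - z ∈ W := fun z hz => sub_mem (hW z hz) hz
  have first_difference : (c 1 + c 2) • x 0 + (2 * c 2) • x 1 ∈ W := by
    convert sub_mem_W y hy using 1
    simp only [← hc, map_add, map_smul, h_zero, h_one, h_two]
    module
  have second_difference : (2 * c 2) • x 0 ∈ W := by
    convert sub_mem_W _ first_difference using 1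
    simp only [map_add, map_smul, h_zero, h_one]
    module
  rcases ne_or_eq (c 2) 0 with hc2 | hc2
  · exact (W.smul_mem_iff (mul_ne_zero h2 hc2)).1 second_difference
  rcases ne_or_eq (c 1) 0 with hc1 | hc1
  · exact (W.smul_mem_iff hc1).1 (by simpa [hc2] using first_difference)
  have hy_eq : y = c 0 • x 0 := by simp [← hc, hc1, hc2]
  have hc0 : c 0 ≠ 0 := fun h => hy_ne (by simp [hy_eq, h])
  exact (W.smul_mem_iff hc0).1 (hy_eq ▸ hy)

lemma map₂_top_le_of_forall_self_mem (h2 : (2 : F) ≠ 0) {B : V →ₗ[F] V →ₗ[F] N}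
    (hB : ∀ v w, B v w = B w v) {W : Submodule F N} (hW : ∀ v, B v v ∈ W) :
    Submodule.map₂ B ⊤ ⊤ ≤ W := by
  refine Submodule.map₂_le.2 fun v _ w _ => (W.smul_mem_iff h2).1 ?_
  have polarization : (2 : F) • B v w = B (v + w) (v + w) - B v v - B w w := by
    simp only [map_add, LinearMap.add_apply, hB w v]
    module
  exact polarization ▸ sub_mem (sub_mem (hW _) (hW _)) (hW _)

lemma exists_transvection (b : Module.Basis (Fin 2) F V) :
    ∃ τ : V ≃ₗ[F] V, τ (b 0) = b 0 ∧ τ (b 1) = b 0 + b 1 := by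
  have h : b.coord 1 (b 0) = 0 := by simp
  exact ⟨LinearEquiv.transvection h, by simp [LinearMap.transvection.apply],
    by simp [LinearMap.transvection.apply, add_comm]⟩

theorem eq_bot_or_eq_map₂_top (h2 : (2 : F) ≠ 0) (b : Module.Basis (Fin 2) F V)
    {B : V →ₗ[F] V →ₗ[F] N} (hB : ∀ v w, B v w = B w v) {T : (V ≃ₗ[F] V) → N →ₗ[F] N}
    (hT : ∀ g v w, T g (B v w) = B (g v) (g w)) {W : Submodule F N}
    (hWB : W ≤ Submodule.map₂ B ⊤ ⊤) (hW : ∀ g, ∀ x ∈ W, T g x ∈ W) :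
    W = ⊥ ∨ W = Submodule.map₂ B ⊤ ⊤ := by
  refine or_iff_not_imp_left.2 fun hW_ne => hWB.antisymm ?_
  obtain ⟨τ, hτ0, hτ1⟩ := exists_transvection b
  have square_mem : B (b 0) (b 0) ∈ W := by
    refine apply_zero_mem_of_unipotent h2 (T := T τ) (x := quadraticMonomials B b) ?_ ?_ ?_ (hW τ)
      (map₂_top_eq_span_quadraticMonomials hB b ▸ hWB) hW_ne
    · simp [quadraticMonomials, hT, hτ0]
    · simp [quadraticMonomials, hT, hτ0, hτ1]
    · simp only [quadraticMonomials, Matrix.cons_val, hT, hτ1, map_add, LinearMap.add_apply,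
        hB (b 1) (b 0)]
      module
  refine map₂_top_le_of_forall_self_mem h2 hB fun v => ?_
  rcases eq_or_ne v 0 with rfl | hv
  · simp
  obtain ⟨g, rfl⟩ := exists_linearEquiv_apply_eq (F := F) (b.ne_zero 0) hv
  exact hT g _ _ ▸ hW g _ square_mem

end SymmetricSquare

section Brackets

variable (F : Type*) {V : Type*} [Field F] [AddCommGroup V] [Module F V]

/-- The bracket `(u, w) ↦ [u, w] ∈ T²V` as an alternating map. -/
noncomputable def br11Alternating : V [⋀^Fin 2]→ₗ[F] V ⊗[F] V where
  toMultilinearMap := .mk' (fun m => br11 F (m 0) (m 1))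
    (fun m i x y => by fin_cases i <;> simp [br11, tmul_add, add_tmul, add_sub_add_comm])
    (fun m i c x => by fin_cases i <;> simp [br11, tmul_smul, smul_tmul', smul_sub])
  map_eq_zero_of_eq' m i j h hij := by
    fin_cases i <;> fin_cases j <;> simp_all [br11]

lemma br11_eq_det_smul (b : Module.Basis (Fin 2) F V) (u v : V) :
    br11 F u v = b.det ![u, v] • br11 F (b 0) (b 1) :=
  alternatingMap_apply_eq_det_smul b (br11Alternating F) ![u, v]

lemma map_br11 (g : V →ₗ[F] V) (u v : V) :
    TensorProduct.map g g (br11 F u v) = br11 F (g u) (g v) := by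
  simp [br11]

lemma map_br11_eq_det_smul (b : Module.Basis (Fin 2) F V) (g : V →ₗ[F] V) (u v : V) :
    TensorProduct.map g g (br11 F u v) = LinearMap.det g • br11 F u v := by
  rw [map_br11]
  exact alternatingMap_apply_comp b (br11Alternating F) g ![u, v]

/-- The linear map `⋀²V → T²V`, `u ∧ v ↦ [u, v]`. -/
noncomputable def wedgeToTensor : ⋀[F]^2 V →ₗ[F] V ⊗[F] V :=
  exteriorPower.alternatingMapLinearEquiv (br11Alternating F)

lemma wedgeToTensor_wedge2 (u v : V) : wedgeToTensor F (wedge2 F u v) = br11 F u v :=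
  exteriorPower.alternatingMapLinearEquiv_apply_ιMulti (br11Alternating F) ![u, v]

lemma extPowMap_eq_map (n : ℕ) (g : V →ₗ[F] V) : extPowMap F n g = exteriorPower.map n g := by
  ext m
  simp only [LinearMap.compAlternatingMap_apply, exteriorPower.map_apply_ιMulti,
    exteriorPower.ιMulti_apply_coe]
  exact ExteriorAlgebra.map_apply_ιMulti g m

lemma wedgeToTensor_extPowMap (g : V →ₗ[F] V) (a : ⋀[F]^2 V) :
    wedgeToTensor F (extPowMap F 2 g a) = TensorProduct.map g g (wedgeToTensor F a) := by
  suffices wedgeToTensor F ∘ₗ extPowMap F 2 g = TensorProduct.map g g ∘ₗ wedgeToTensor F from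
    LinearMap.congr_fun this a
  rw [extPowMap_eq_map]
  ext m
  simp [wedgeToTensor, br11Alternating, map_br11]

/-- The bracket `x ⊗ y ↦ [x, y]` of `T²V` with `V`, as a linear map. -/
noncomputable def br21Linear : (V ⊗[F] V) ⊗[F] V →ₗ[F] (V ⊗[F] V) ⊗[F] V :=
  LinearMap.id - (TensorProduct.assoc F V V V).symm.toLinearMap ∘ₗ
    (TensorProduct.comm F (V ⊗[F] V) V).toLinearMap

/-- The bracket `z ⊗ y ↦ [z, y]` of `T³V` with `V`, as a linear map. -/
noncomputable def br31Linear : ((V ⊗[F] V) ⊗[F] V) ⊗[F] V →ₗ[F] (V ⊗[F] V) ⊗[F] (V ⊗[F] V) :=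
  (e31 F).toLinearMap - (e13 F).toLinearMap ∘ₗ
    (TensorProduct.comm F ((V ⊗[F] V) ⊗[F] V) V).toLinearMap

/-- The double bracket `a ↦ (w ⊗ x ↦ [[a, w], x])` for `a ∈ T²V`. -/
noncomputable def doubleBracket : V ⊗[F] V →ₗ[F] V ⊗[F] V →ₗ[F] (V ⊗[F] V) ⊗[F] (V ⊗[F] V) :=
  TensorProduct.curry (br31Linear F ∘ₗ (br21Linear F).rTensor V ∘ₗ
    (TensorProduct.assoc F (V ⊗[F] V) V V).symm.toLinearMap)

lemma doubleBracket_tmul (a : V ⊗[F] V) (w x : V) :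
    doubleBracket F a (w ⊗ₜ x) = br31 F (br21 F a w) x := rfl

lemma doubleBracket_tmul_tmul (u v w x : V) :
    doubleBracket F (u ⊗ₜ v) (w ⊗ₜ x) =
      (u ⊗ₜ[F] v) ⊗ₜ[F] (w ⊗ₜ[F] x) - (w ⊗ₜ[F] u) ⊗ₜ[F] (v ⊗ₜ[F] x)
        - (x ⊗ₜ[F] u) ⊗ₜ[F] (v ⊗ₜ[F] w) + (x ⊗ₜ[F] w) ⊗ₜ[F] (u ⊗ₜ[F] v) := by
  simp only [doubleBracket_tmul, br31, br21, e31, e13, map_sub, sub_tmul, tmul_sub, assoc_tmul,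
    assoc_symm_tmul, LinearEquiv.trans_apply, congr_tmul, LinearEquiv.refl_apply]
  abel

lemma doubleBracket_map (g : V →ₗ[F] V) (a s : V ⊗[F] V) :
    doubleBracket F (TensorProduct.map g g a) (TensorProduct.map g g s) =
      map4 F g (doubleBracket F a s) := by
  suffices (doubleBracket F).compl₁₂ (TensorProduct.map g g) (TensorProduct.map g g) =
      (doubleBracket F).compr₂ (map4 F g) from LinearMap.congr_fun₂ this a s
  ext u v w x
  simp [doubleBracket_tmul_tmul, map4]

/-- The Jacobi identity `[[a, w], x] - [[a, x], w] = [a, [w, x]]`. -/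
lemma doubleBracket_br11 (a : V ⊗[F] V) (w x : V) :
    doubleBracket F a (br11 F w x) = a ⊗ₜ[F] br11 F w x - br11 F w x ⊗ₜ[F] a := by
  induction a with
  | zero => simp
  | add a a' ha ha' =>
    simp only [map_add, LinearMap.add_apply, ha, ha', add_tmul, tmul_add]
    abel
  | tmul u v =>
    simp only [br11, map_sub, doubleBracket_tmul_tmul, sub_tmul, tmul_sub]
    abel

lemma doubleBracket_wedgeToTensor_mem_L4 (a : ⋀[F]^2 V) (s : V ⊗[F] V) :
    doubleBracket F (wedgeToTensor F a) s ∈ L4 F := by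
  induction s with
  | zero => simp
  | add s s' hs hs' => simpa using add_mem hs hs'
  | tmul w x =>
    suffices ⊤ ≤ (L4 F).comap ((doubleBracket F).flip (w ⊗ₜ x) ∘ₗ wedgeToTensor F) from
      this Submodule.mem_top
    rw [← exteriorPower.ιMulti_span, Submodule.span_le]
    rintro _ ⟨m, rfl⟩
    exact Submodule.subset_span ⟨m 0, m 1, w, x, by
      simp [wedgeToTensor, br11Alternating, doubleBracket_tmul]⟩

/-- The natural map `⋀²V ⊗ S²V → T⁴V` with
`(u ∧ v) ⊗ (w ⊗ x + x ⊗ w) ↦ [[[u, v], w], x] + [[[u, v], x], w]`. -/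
noncomputable def wedgeSymBracket :
    (⋀[F]^2 V) ⊗[F] S2 F (V := V) →ₗ[F] (V ⊗[F] V) ⊗[F] (V ⊗[F] V) :=
  TensorProduct.lift ((doubleBracket F).compl₁₂ (wedgeToTensor F) (S2 F).subtype)

lemma wedgeSymBracket_tmul (a : ⋀[F]^2 V) (s : S2 F (V := V)) :
    wedgeSymBracket F (a ⊗ₜ s) = doubleBracket F (wedgeToTensor F a) s := rfl

lemma wedgeSymBracket_map (g : V →ₗ[F] V) (y : (⋀[F]^2 V) ⊗[F] S2 F (V := V)) :
    wedgeSymBracket F (TensorProduct.map (extPowMap F 2 g) (S2map F g) y) =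
      map4 F g (wedgeSymBracket F y) := by
  induction y with
  | zero => simp
  | add y y' hy hy' => simp [hy, hy']
  | tmul a s =>
    rw [map_tmul, wedgeSymBracket_tmul, wedgeSymBracket_tmul, wedgeToTensor_extPowMap,
      ← doubleBracket_map]
    rfl

/-- The bilinear map `(v, w) ↦ v ⊗ w + w ⊗ v`, whose values span `S²V`. -/
noncomputable def symTmul : V →ₗ[F] V →ₗ[F] V ⊗[F] V :=
  TensorProduct.mk F V V + (TensorProduct.mk F V V).flip

lemma symTmul_apply (v w : V) : symTmul F v w = v ⊗ₜ w + w ⊗ₜ v := rfl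

lemma S2_eq_map₂_symTmul : S2 F (V := V) = Submodule.map₂ (symTmul F) ⊤ ⊤ := by
  rw [S2, Submodule.map₂_eq_span_image2]
  congr 1
  ext t
  simp [symTmul_apply, eq_comm]

lemma symTmul_comm (v w : V) : symTmul F v w = symTmul F w v := by
  rw [symTmul_apply, symTmul_apply, add_comm]

lemma finrank_S2_le (b : Module.Basis (Fin 2) F V) : Module.finrank F (S2 F (V := V)) ≤ 3 := by
  rw [S2_eq_map₂_symTmul, map₂_top_eq_span_quadraticMonomials (symTmul_comm F) b]
  exact finrank_range_le_card _

/-- For a basis `(p, q)` of a plane, the bilinear map `(w, x) ↦ [[[p, q], w], x]`. -/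
noncomputable def bracketForm (b : Module.Basis (Fin 2) F V) :
    V →ₗ[F] V →ₗ[F] (V ⊗[F] V) ⊗[F] (V ⊗[F] V) :=
  (TensorProduct.mk F V V).compr₂ (doubleBracket F (br11 F (b 0) (b 1)))

variable {F} (b : Module.Basis (Fin 2) F V)
include b

lemma bracketForm_apply (w x : V) :
    bracketForm F b w x = doubleBracket F (br11 F (b 0) (b 1)) (w ⊗ₜ x) := rfl

lemma bracketForm_comm (w x : V) : bracketForm F b w x = bracketForm F b x w := by
  rw [← sub_eq_zero, bracketForm_apply, bracketForm_apply, ← map_sub]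
  change doubleBracket F _ (br11 F w x) = 0
  rw [doubleBracket_br11, br11_eq_det_smul F b w x, tmul_smul, ← smul_tmul', sub_self]

lemma L4_eq_map₂_bracketForm : L4 F (V := V) = Submodule.map₂ (bracketForm F b) ⊤ ⊤ := by
  apply le_antisymm
  · refine Submodule.span_le.2 ?_
    rintro _ ⟨u, v, w, x, rfl⟩
    rw [← doubleBracket_tmul, br11_eq_det_smul F b, map_smul]
    exact Submodule.smul_mem _ _ (Submodule.apply_mem_map₂ _ Submodule.mem_top Submodule.mem_top)
  · exact Submodule.map₂_le.2 fun w _ x _ => Submodule.subset_span ⟨b 0, b 1, w, x, rfl⟩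

lemma linearIndependent_quadraticMonomials_bracketForm :
    LinearIndependent F (quadraticMonomials (bracketForm F b) b) := by
  rw [Fintype.linearIndependent_iff]
  intro c hc
  have coeff_eq_zero (i j k l : Fin 2) :
      ((b.tensorProduct b).tensorProduct (b.tensorProduct b)).repr
        (∑ i, c i • quadraticMonomials (bracketForm F b) b i) ((i, j), (k, l)) = 0 := by
    simp [hc]
  intro i
  fin_cases i
  · simpa [Fin.sum_univ_three, quadraticMonomials, bracketForm_apply, br11,
      doubleBracket_tmul_tmul] using coeff_eq_zero 1 0 0 0
  · simpa [Fin.sum_univ_three, quadraticMonomials, bracketForm_apply, br11,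
      doubleBracket_tmul_tmul] using coeff_eq_zero 1 1 0 0
  · simpa [Fin.sum_univ_three, quadraticMonomials, bracketForm_apply, br11,
      doubleBracket_tmul_tmul] using coeff_eq_zero 0 1 1 1

lemma finrank_L4 : Module.finrank F (L4 F (V := V)) = 3 := by
  rw [L4_eq_map₂_bracketForm b, map₂_top_eq_span_quadraticMonomials (bracketForm_comm b) b,
    finrank_span_eq_card (linearIndependent_quadraticMonomials_bracketForm b), Fintype.card_fin]

lemma range_wedgeSymBracket (h2 : (2 : F) ≠ 0) :
    LinearMap.range (wedgeSymBracket F (V := V)) = L4 F := by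
  apply le_antisymm
  · rintro _ ⟨y, rfl⟩
    induction y with
    | zero => simp
    | add y y' hy hy' => simpa using add_mem hy hy'
    | tmul a s => exact doubleBracket_wedgeToTensor_mem_L4 F a s
  · rw [L4_eq_map₂_bracketForm b]
    refine Submodule.map₂_le.2 fun w _ x _ => (Submodule.smul_mem_iff _ h2).1 ?_
    refine ⟨wedge2 F (b 0) (b 1) ⊗ₜ ⟨w ⊗ₜ x + x ⊗ₜ w, Submodule.subset_span ⟨w, x, rfl⟩⟩, ?_⟩
    rw [wedgeSymBracket_tmul, wedgeToTensor_wedge2, map_add, ← bracketForm_apply,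
      ← bracketForm_apply, bracketForm_comm b x w, two_smul]

lemma finrank_wedge_tensor_S2_le :
    Module.finrank F ((⋀[F]^2 V) ⊗[F] S2 F (V := V)) ≤ 3 := by
  have := Module.Finite.of_basis b
  rw [Module.finrank_tensorProduct, exteriorPower.finrank_eq, Module.finrank_eq_card_basis b]
  simpa using finrank_S2_le F b

lemma wedgeSymBracket_injective (h2 : (2 : F) ≠ 0) :
    Function.Injective (wedgeSymBracket F (V := V)) := by
  have := Module.Finite.of_basis b
  apply injective_of_finrank_le_finrank_range (M := (⋀[F]^2 V) ⊗[F] S2 F (V := V))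
  rw [range_wedgeSymBracket b h2, finrank_L4 b]
  exact finrank_wedge_tensor_S2_le b

lemma map4_bracketForm (g : V →ₗ[F] V) (w x : V) :
    map4 F g (bracketForm F b w x) = LinearMap.det g • bracketForm F b (g w) (g x) := by
  rw [bracketForm_apply, ← doubleBracket_map, map_br11_eq_det_smul F b, map_smul]
  rfl

theorem L4_irreducible (h2 : (2 : F) ≠ 0) {W : Submodule F ((V ⊗[F] V) ⊗[F] (V ⊗[F] V))}
    (hWL : W ≤ L4 F) (hW : ∀ g : V ≃ₗ[F] V, ∀ x ∈ W, map4 F g.toLinearMap x ∈ W) :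
    W = ⊥ ∨ W = L4 F := by
  rw [L4_eq_map₂_bracketForm b] at hWL ⊢
  refine eq_bot_or_eq_map₂_top h2 b (bracketForm_comm b)
    (T := fun g => (LinearMap.det g.toLinearMap)⁻¹ • map4 F g.toLinearMap) (fun g v w => ?_) hWL
    fun g x hx => W.smul_mem _ (hW g x hx)
  simp [map4_bracketForm, smul_smul, inv_mul_cancel₀ g.isUnit_det'.ne_zero]

end Brackets

theorem lie_power_four_dim_two_general (F V : Type*) [Field F] [AddCommGroup V] [Module F V]
    (h2 : ringChar F ≠ 2) (hd : Module.finrank F V = 2) :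
    (∃ e : ((⋀[F]^2 V) ⊗[F] (S2 F (V := V))) ≃ₗ[F] L4 F (V := V),
      ∀ (g : V ≃ₗ[F] V) (y : (⋀[F]^2 V) ⊗[F] (S2 F (V := V))),
        (e (TensorProduct.map (extPowMap F 2 g.toLinearMap) (S2map F g.toLinearMap) y)
            : (V ⊗[F] V) ⊗[F] (V ⊗[F] V))
          = map4 F g.toLinearMap (e y)) ∧
    Module.finrank F (L4 F (V := V)) = 3 ∧
    (∀ W : Submodule F ((V ⊗[F] V) ⊗[F] (V ⊗[F] V)), W ≤ L4 F (V := V) →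
      (∀ g : V ≃ₗ[F] V, ∀ x ∈ W, map4 F g.toLinearMap x ∈ W) →
      W = ⊥ ∨ W = L4 F (V := V)) := by
  have two_ne_zero : (2 : F) ≠ 0 := Ring.two_ne_zero h2
  have : Module.Finite F V := Module.finite_of_finrank_pos (by omega)
  let b := Module.finBasisOfFinrankEq F V hd
  let e := (LinearEquiv.ofInjective _ (wedgeSymBracket_injective b two_ne_zero)).trans
    (LinearEquiv.ofEq _ _ (range_wedgeSymBracket b two_ne_zero))
  exact ⟨⟨e, fun g y => wedgeSymBracket_map F g.toLinearMap y⟩, finrank_L4 b,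
    fun _ => L4_irreducible b two_ne_zero⟩

theorem lie_power_four_dim_two
    (F V : Type*) [Field F] [AddCommGroup V] [Module F V]
    (h2 : ringChar F ≠ 2) (h3 : ringChar F ≠ 3)
    (hd : Module.finrank F V = 2) :
    -- a `GL(V)`-equivariant isomorphism `Λ²V ⊗ S²V ≅ L⁴V`
    (∃ e : ((⋀[F]^2 V) ⊗[F] (S2 F (V := V))) ≃ₗ[F] L4 F (V := V),
      ∀ (g : V ≃ₗ[F] V) (y : (⋀[F]^2 V) ⊗[F] (S2 F (V := V))),
        (e (TensorProduct.map (extPowMap F 2 g.toLinearMap) (S2map F g.toLinearMap) y)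
            : (V ⊗[F] V) ⊗[F] (V ⊗[F] V))
          = map4 F g.toLinearMap (e y)) ∧
    -- in particular `dim L⁴V = 3`
    Module.finrank F (L4 F (V := V)) = 3 ∧
    -- and `L⁴V` is an irreducible `GL(V)`-module
    (∀ W : Submodule F ((V ⊗[F] V) ⊗[F] (V ⊗[F] V)), W ≤ L4 F (V := V) →
      (∀ g : V ≃ₗ[F] V, ∀ x ∈ W, map4 F g.toLinearMap x ∈ W) →
      W = ⊥ ∨ W = L4 F (V := V)) := by
  exact lie_power_four_dim_two_general F V h2 hd
end
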